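/- For every θ ∈ [0, π/2) and every positive integer l, T_l(1/cos θ) > (1/2)·e^{lθ}. -/

import Mathlib

open Polynomial

/-!
The identity `T_l(cosh t) = cosh (l t)` with `t = arcosh (1 / cos θ)` gives
`T_l(1 / cos θ) = (exp (l t) + exp (-l t)) / 2 > exp (l t) / 2`, so it suffices that `θ ≤ t`,
that is `cosh θ * cos θ ≤ 1` (`cosh_mul_cos_le_one`). The derivative of `cosh * cos` is
`sinh * cos - cosh * sin`, which vanishes at `0` and itself has derivative
`-2 * sinh * sin ≤ 0`; hence both functions decrease on `[0, π]`.
-/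

lemma sinh_mul_cos_le_cosh_mul_sin {x : ℝ} (hx : x ∈ Set.Icc 0 Real.pi) :
    Real.sinh x * Real.cos x ≤ Real.cosh x * Real.sin x := by
  have anti : AntitoneOn (fun y => Real.sinh y * Real.cos y - Real.cosh y * Real.sin y)
      (Set.Icc 0 Real.pi) := by
    refine antitoneOn_of_hasDerivWithinAt_nonpos (convex_Icc _ _)
      (f' := fun y => -2 * (Real.sinh y * Real.sin y)) (by fun_prop) (fun y _ => ?_)
      (fun y hy => ?_)
    · exact ((((Real.hasDerivAt_sinh y).mul (Real.hasDerivAt_cos y)).sub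
        ((Real.hasDerivAt_cosh y).mul (Real.hasDerivAt_sin y))).congr_deriv
        (by ring)).hasDerivWithinAt
    · have hy' := interior_subset hy
      have := mul_nonneg (Real.sinh_nonneg_iff.2 hy'.1) (Real.sin_nonneg_of_mem_Icc hy')
      linarith
  have h := anti (Set.left_mem_Icc.2 Real.pi_pos.le) hx hx.1
  simp only [Real.sinh_zero, Real.sin_zero] at h
  linarith

lemma cosh_mul_cos_le_one {x : ℝ} (hx : x ∈ Set.Icc 0 Real.pi) :
    Real.cosh x * Real.cos x ≤ 1 := by
  have anti : AntitoneOn (fun y => Real.cosh y * Real.cos y) (Set.Icc 0 Real.pi) := by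
    refine antitoneOn_of_hasDerivWithinAt_nonpos (convex_Icc _ _)
      (f' := fun y => Real.sinh y * Real.cos y - Real.cosh y * Real.sin y) (by fun_prop)
      (fun y _ => ?_) (fun y hy => ?_)
    · exact (((Real.hasDerivAt_cosh y).mul (Real.hasDerivAt_cos y)).congr_deriv
        (by ring)).hasDerivWithinAt
    · exact sub_nonpos.2 (sinh_mul_cos_le_cosh_mul_sin (interior_subset hy))
  simpa using anti (Set.left_mem_Icc.2 Real.pi_pos.le) hx hx.1

/-- For every θ ∈ [0, π/2) and every positive integer l,
`T_l(1/cos θ) > (1/2)·e^{lθ}`, where `T_l` is the Chebyshev polynomial of the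
first kind. -/
theorem chebyshev_T_one_div_cos_gt (θ : ℝ) (hθ : θ ∈ Set.Ico 0 (Real.pi / 2))
    (l : ℕ) (hl : 0 < l) :
    (Polynomial.Chebyshev.T ℝ l).eval (1 / Real.cos θ) > (1 / 2) * Real.exp (l * θ) := by
  obtain ⟨h0, h1⟩ := hθ
  have hcos : 0 < Real.cos θ := Real.cos_pos_of_mem_Ioo ⟨by linarith, h1⟩
  have hcosh : Real.cosh θ ≤ 1 / Real.cos θ :=
    (le_div_iff₀ hcos).2 (cosh_mul_cos_le_one ⟨h0, by linarith⟩)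
  have hone : 1 ≤ 1 / Real.cos θ := (Real.one_le_cosh θ).trans hcosh
  have hle : θ ≤ Real.arcosh (1 / Real.cos θ) :=
    (Real.arcosh_cosh h0).symm.trans_le
      ((Real.arcosh_le_arcosh (Real.cosh_pos θ) (by positivity)).2 hcosh)
  set t := Real.arcosh (1 / Real.cos θ) with ht
  have hexp : Real.exp (l * θ) ≤ Real.exp (l * t) := by gcongr
  rw [← Real.cosh_arcosh hone, ← ht, Polynomial.Chebyshev.T_real_cosh, Int.cast_natCast,
    Real.cosh_eq]
  linarith [Real.exp_pos (-(l * t))]
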